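/- Fix t and let a, c, d, κ, κ′ be real numbers with a ≠ 0, κ > 0, let ω₀ > 0, C₀ = ω₀²/4, θ = (κ′ − (c+d)κ)/(4aκ), ε = √(ω₀/2)/κ, and Cₙ = (ε/(√π·2ⁿ·n!))^{1/2}. Define Ψₙ(x) = Cₙ·exp(iθx²)·exp(−ε²x²/2)·Hₙ(εx) with Hₙ the n-th physicists' Hermite polynomial, and let â, â† be the operators (â f)(x) = (√ω₀/(2κ) − i(κ′ − (c+d)κ)/(2a√ω₀)) x f(x) + (κ/√ω₀) f′(x), (â† f)(x) = (√ω₀/(2κ) + i(κ′ − (c+d)κ)/(2a√ω₀)) x f(x) − (κ/√ω₀) f′(x). Then for every n ≥ 1, âΨₙ = √n·Ψₙ₋₁, and for every n ≥ 0, â†Ψₙ = √(n+1)·Ψₙ₊₁ (pointwise on ℝ). -/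

import Mathlib

/-- The physicists' Hermite polynomials: H₀ = 1, Hₙ₊₁(ξ) = 2ξHₙ(ξ) − Hₙ′(ξ). -/
noncomputable def physHermite : ℕ → Polynomial ℝ
  | 0 => 1
  | n + 1 => 2 * Polynomial.X * physHermite n - Polynomial.derivative (physHermite n)

/-- Hₙ(x), the n-th physicists' Hermite polynomial evaluated at x. -/
noncomputable def pH (n : ℕ) (x : ℝ) : ℝ := (physHermite n).eval x

/-- θ = (κ′ − (c+d)κ)/(4aκ). -/
noncomputable def theta10 (a c d κ κ' : ℝ) : ℝ := (κ' - (c + d) * κ) / (4 * a * κ)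

/-- ε = √(ω₀/2)/κ. -/
noncomputable def eps10 (κ ω₀ : ℝ) : ℝ := Real.sqrt (ω₀ / 2) / κ

/-- Cₙ = (ε/(√π·2ⁿ·n!))^{1/2}. -/
noncomputable def Cconst10 (κ ω₀ : ℝ) (n : ℕ) : ℝ :=
  Real.sqrt (eps10 κ ω₀ / (Real.sqrt Real.pi * 2 ^ n * (n.factorial : ℝ)))

/-- Ψₙ(x) = Cₙ·exp(iθx²)·exp(−ε²x²/2)·Hₙ(εx). -/
noncomputable def Psi10 (a c d κ κ' ω₀ : ℝ) (n : ℕ) (x : ℝ) : ℂ :=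
  (Cconst10 κ ω₀ n : ℂ) *
    Complex.exp (Complex.I * (theta10 a c d κ κ' : ℂ) * (x : ℂ) ^ 2) *
    (Real.exp (-(eps10 κ ω₀) ^ 2 * x ^ 2 / 2) : ℂ) * (pH n (eps10 κ ω₀ * x) : ℂ)

/-- The annihilation operator
â f = (√ω₀/(2κ) − i(κ′ − (c+d)κ)/(2a√ω₀)) x f + (κ/√ω₀) f′. -/
noncomputable def ahat (ω₀ a c d κ κ' : ℝ) (f : ℝ → ℂ) (x : ℝ) : ℂ :=
  ((Real.sqrt ω₀ / (2 * κ) : ℝ)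
      - Complex.I * (((κ' - (c + d) * κ) / (2 * a * Real.sqrt ω₀) : ℝ))) * (x : ℂ) * f x
    + ((κ / Real.sqrt ω₀ : ℝ)) * deriv f x

/-- The creation operator
â† f = (√ω₀/(2κ) + i(κ′ − (c+d)κ)/(2a√ω₀)) x f − (κ/√ω₀) f′. -/
noncomputable def adag (ω₀ a c d κ κ' : ℝ) (f : ℝ → ℂ) (x : ℝ) : ℂ :=
  ((Real.sqrt ω₀ / (2 * κ) : ℝ)
      + Complex.I * (((κ' - (c + d) * κ) / (2 * a * Real.sqrt ω₀) : ℝ))) * (x : ℂ) * f x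
    - ((κ / Real.sqrt ω₀ : ℝ)) * deriv f x

theorem physHermite_deriv10 (n : ℕ) :
    Polynomial.derivative (physHermite (n + 1)) = 2 * ((n : Polynomial ℝ) + 1) * physHermite n := by
  induction n with
  | zero => simp [physHermite]
  | succ k ih =>
    have h1 : physHermite (k + 2) = 2 * Polynomial.X * physHermite (k + 1)
        - Polynomial.derivative (physHermite (k + 1)) := rfl
    have h2 : physHermite (k + 1) = 2 * Polynomial.X * physHermite k
        - Polynomial.derivative (physHermite k) := rfl
    have h3 : Polynomial.derivative (2 * ((k : Polynomial ℝ) + 1) * physHermite k)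
        = 2 * ((k : Polynomial ℝ) + 1) * Polynomial.derivative (physHermite k) := by
      simp [Polynomial.derivative_mul]
    have h4 : Polynomial.derivative (2 * Polynomial.X * physHermite (k + 1))
        = 2 * physHermite (k + 1)
          + 2 * Polynomial.X * Polynomial.derivative (physHermite (k + 1)) := by
      simp [Polynomial.derivative_mul]
    rw [h1, Polynomial.derivative_sub, h4, ih, h3]
    push_cast
    linear_combination (-(2 * ((k : Polynomial ℝ) + 1))) * h2

theorem Cconst10_succ (κ ω₀ : ℝ) (n : ℕ) :
    Cconst10 κ ω₀ n = Real.sqrt 2 * Real.sqrt (n + 1) * Cconst10 κ ω₀ (n + 1) := by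
  unfold Cconst10
  rw [← Real.sqrt_mul (by norm_num), ← Real.sqrt_mul (by positivity)]
  congr 1
  have : Real.sqrt Real.pi ≠ 0 := (Real.sqrt_pos.2 Real.pi_pos).ne'
  have h2 : (n.factorial : ℝ) ≠ 0 := by positivity
  have h3 : (n : ℝ) + 1 ≠ 0 := by positivity
  rw [Nat.factorial_succ]
  push_cast
  field_simp
  try ring

theorem Psi10_hasDerivAt (a c d κ κ' ω₀ : ℝ) (n : ℕ) (x : ℝ) :
    HasDerivAt (Psi10 a c d κ κ' ω₀ n)
      ((Cconst10 κ ω₀ n : ℂ) *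
        Complex.exp (Complex.I * (theta10 a c d κ κ' : ℂ) * (x : ℂ) ^ 2) *
        (Real.exp (-(eps10 κ ω₀) ^ 2 * x ^ 2 / 2) : ℂ) *
        ((2 * Complex.I * (theta10 a c d κ κ' : ℂ) * x - (eps10 κ ω₀ : ℂ) ^ 2 * x)
            * (pH n (eps10 κ ω₀ * x) : ℂ)
          + (eps10 κ ω₀ : ℂ)
            * ((Polynomial.derivative (physHermite n)).eval (eps10 κ ω₀ * x) : ℝ))) x := by
  have hx : HasDerivAt (fun y : ℝ => (y : ℂ)) 1 x := Complex.ofRealCLM.hasDerivAt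
  have h1 := (((hx.pow 2).const_mul (Complex.I * (theta10 a c d κ κ' : ℂ))).cexp).const_mul
    (Cconst10 κ ω₀ n : ℂ)
  have h2 : HasDerivAt (fun y : ℝ => Real.exp (-(eps10 κ ω₀) ^ 2 * y ^ 2 / 2))
      (Real.exp (-(eps10 κ ω₀) ^ 2 * x ^ 2 / 2) * (-(eps10 κ ω₀) ^ 2 * x)) x := by
    have := (((hasDerivAt_pow 2 x).const_mul (-(eps10 κ ω₀) ^ 2)).div_const 2).exp
    refine HasDerivAt.congr_deriv this ?_
    norm_num
    ring
  have h3 : HasDerivAt (fun y : ℝ => pH n (eps10 κ ω₀ * y))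
      ((Polynomial.derivative (physHermite n)).eval (eps10 κ ω₀ * x) * eps10 κ ω₀) x := by
    have h := (hasDerivAt_id x).const_mul (eps10 κ ω₀)
    have := ((physHermite n).hasDerivAt (eps10 κ ω₀ * x)).comp x h
    simpa [pH, Function.comp_def] using this
  have h := (h1.mul h2.ofReal_comp).mul h3.ofReal_comp
  refine HasDerivAt.congr_deriv h ?_
  push_cast
  simp
  ring

/-- the ladder operators act on the normalized eigenfunctions by
âΨₙ = √n·Ψₙ₋₁ (n ≥ 1) and â†Ψₙ = √(n+1)·Ψₙ₊₁. -/
theorem statement_10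
    (a c d κ κ' ω₀ : ℝ) (ha : a ≠ 0) (hκ : 0 < κ) (hω₀ : 0 < ω₀) :
    (∀ n : ℕ, 1 ≤ n → ∀ x : ℝ,
        ahat ω₀ a c d κ κ' (Psi10 a c d κ κ' ω₀ n) x
          = (Real.sqrt n : ℂ) * Psi10 a c d κ κ' ω₀ (n - 1) x) ∧
    (∀ n : ℕ, ∀ x : ℝ,
        adag ω₀ a c d κ κ' (Psi10 a c d κ κ' ω₀ n) x
          = (Real.sqrt (n + 1) : ℂ) * Psi10 a c d κ κ' ω₀ (n + 1) x) := by
  have hs : 0 < Real.sqrt ω₀ := Real.sqrt_pos.2 hω₀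
  have hr : 0 < Real.sqrt 2 := Real.sqrt_pos.2 (by norm_num)
  have hr2 : Real.sqrt 2 ^ 2 = 2 := Real.sq_sqrt (by norm_num)
  have he : eps10 κ ω₀ = Real.sqrt ω₀ / (Real.sqrt 2 * κ) := by
    unfold eps10
    rw [Real.sqrt_div hω₀.le, div_div]
  have e1 : κ / Real.sqrt ω₀ * eps10 κ ω₀ ^ 2 = Real.sqrt ω₀ / (2 * κ) := by
    rw [he, div_pow, mul_pow, hr2]; field_simp
  have e2 : κ / Real.sqrt ω₀ * eps10 κ ω₀ * Real.sqrt 2 = 1 := by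
    rw [he]; field_simp
  have e3 : (κ' - (c + d) * κ) / (2 * a * Real.sqrt ω₀)
      = κ / Real.sqrt ω₀ * (2 * theta10 a c d κ κ') := by
    unfold theta10; field_simp; try norm_num
  have E2 : ((κ / Real.sqrt ω₀ : ℝ) : ℂ) * (eps10 κ ω₀ : ℂ) * (Real.sqrt 2 : ℂ) = 1 := by
    exact_mod_cast e2
  have R2 : (Real.sqrt 2 : ℂ) ^ 2 = 2 := by exact_mod_cast hr2
  constructor
  · intro n hn x
    obtain ⟨m, rfl⟩ : ∃ m, n = m + 1 := ⟨n - 1, by omega⟩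
    have hc : (Real.sqrt ((m : ℝ) + 1) : ℂ) ^ 2 = (m : ℂ) + 1 := by
      have : Real.sqrt ((m : ℝ) + 1) ^ 2 = (m : ℝ) + 1 := Real.sq_sqrt (by positivity)
      exact_mod_cast this
    unfold ahat
    rw [(Psi10_hasDerivAt a c d κ κ' ω₀ (m + 1) x).deriv, ← e1, e3, physHermite_deriv10]
    simp only [Nat.add_sub_cancel, Psi10]
    rw [Cconst10_succ κ ω₀ m]
    have hev : (2 * ((m : Polynomial ℝ) + 1) * physHermite m).eval (eps10 κ ω₀ * x)
        = 2 * ((m : ℝ) + 1) * pH m (eps10 κ ω₀ * x) := by simp [pH]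
    rw [hev]
    simp only [Complex.ofReal_mul, Complex.ofReal_add, Complex.ofReal_natCast,
      Complex.ofReal_one, Complex.ofReal_ofNat, Complex.ofReal_pow, Nat.cast_add, Nat.cast_one] at hc E2 ⊢
    generalize ((κ / Real.sqrt ω₀ : ℝ) : ℂ) = q at *
    generalize Complex.exp _ = X
    generalize ((Real.exp _ : ℝ) : ℂ) = Y
    generalize (Cconst10 κ ω₀ (m + 1) : ℂ) = C
    generalize (pH m (eps10 κ ω₀ * x) : ℂ) = P
    generalize (Real.sqrt ((m : ℝ) + 1) : ℂ) = s at *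
    generalize (Real.sqrt 2 : ℂ) = r at *
    generalize (eps10 κ ω₀ : ℂ) = e at *
    linear_combination (C * X * Y * P * r * ((m:ℂ)+1)) * E2 - (C * X * Y * P * q * e * ((m:ℂ)+1)) * R2 - (C * X * Y * P * r) * hc
  · intro n x
    unfold adag
    rw [(Psi10_hasDerivAt a c d κ κ' ω₀ n x).deriv, ← e1, e3]
    simp only [Psi10]
    have hev : pH (n + 1) (eps10 κ ω₀ * x) = 2 * (eps10 κ ω₀ * x) * pH n (eps10 κ ω₀ * x)
        - (Polynomial.derivative (physHermite n)).eval (eps10 κ ω₀ * x) := by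
      simp [pH, physHermite]
    rw [hev, Cconst10_succ κ ω₀ n]
    simp only [Complex.ofReal_mul, Complex.ofReal_sub, Complex.ofReal_ofNat, Complex.ofReal_pow]
      at E2 ⊢
    generalize ((κ / Real.sqrt ω₀ : ℝ) : ℂ) = q at *
    generalize Complex.exp _ = X
    generalize ((Real.exp _ : ℝ) : ℂ) = Y
    generalize (Cconst10 κ ω₀ (n + 1) : ℂ) = C
    generalize (pH n (eps10 κ ω₀ * x) : ℂ) = P
    generalize ((Polynomial.eval _ _ : ℝ) : ℂ) = D
    generalize (Real.sqrt ((n : ℝ) + 1) : ℂ) = s at *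
    generalize (Real.sqrt 2 : ℂ) = r at *
    generalize (eps10 κ ω₀ : ℂ) = e at *
    linear_combination (C * X * Y * s * (2 * e * x * P - D)) * E2
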